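/- Let A be a finite-dimensional left Leibniz algebra over a field F of characteristic zero, with radical R = rad(A) and nilradical N = nilrad(A). Then N = nilrad(R), the nilradical of the Leibniz algebra R. -/

import Mathlib

open Submodule

section LeibnizDefs

variable {F : Type*} {A : Type*} [Field F] [AddCommGroup A] [Module F A]

/-- The span of all products `b*c` with `b ∈ B`, `c ∈ C`. -/
def mulSub (mul : A →ₗ[F] A →ₗ[F] A) (B C : Submodule F A) : Submodule F A :=
  Submodule.span F {z : A | ∃ b ∈ B, ∃ c ∈ C, mul b c = z}

/-- `fSub mul B C = B·C + C·B`, the function `f(B,C)`. -/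
def fSub (mul : A →ₗ[F] A →ₗ[F] A) (B C : Submodule F A) : Submodule F A :=
  mulSub mul B C ⊔ mulSub mul C B

/-- `fIter mul B C n = f^{n+1}(B,C)` (so index `0` is `f^1(B,C) = f(B,C)`). -/
def fIter (mul : A →ₗ[F] A →ₗ[F] A) (B C : Submodule F A) : ℕ → Submodule F A
  | 0 => fSub mul B C
  | n + 1 => fSub mul B (fIter mul B C n)

/-- `lcs mul B n = B^{n+1}`, the lower central series (index `0` is `B^1 = B`). -/
def lcs (mul : A →ₗ[F] A →ₗ[F] A) (B : Submodule F A) : ℕ → Submodule F A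
  | 0 => B
  | n + 1 => mulSub mul B (lcs mul B n)

/-- `ds mul B n = B^{(n+1)}`, the derived series (index `0` is `B^{(1)} = B`). -/
def ds (mul : A →ₗ[F] A →ₗ[F] A) (B : Submodule F A) : ℕ → Submodule F A
  | 0 => B
  | n + 1 => mulSub mul (ds mul B n) (ds mul B n)

/-- `B^ω = ⋂_{i ≥ 1} B^i`. -/
def omegaSub (mul : A →ₗ[F] A →ₗ[F] A) (B : Submodule F A) : Submodule F A :=
  ⨅ n, lcs mul B n

/-- `B` is a subalgebra: a subspace closed under multiplication. -/
def IsSubalg (mul : A →ₗ[F] A →ₗ[F] A) (B : Submodule F A) : Prop :=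
  ∀ x ∈ B, ∀ y ∈ B, mul x y ∈ B

/-- `I` is an ideal of the subalgebra `S`: `I ⊆ S` and `xI + Ix ⊆ I` for all `x ∈ S`. -/
def IsIdealIn (mul : A →ₗ[F] A →ₗ[F] A) (I S : Submodule F A) : Prop :=
  I ≤ S ∧ ∀ x ∈ S, ∀ y ∈ I, mul x y ∈ I ∧ mul y x ∈ I

/-- `B` is subinvariant in `S`: there is a chain of subalgebras
`B = c 0 ⊆ c 1 ⊆ ⋯ ⊆ c t = S` with each term an ideal of the next. -/
def IsSubinvariantIn (mul : A →ₗ[F] A →ₗ[F] A) (B S : Submodule F A) : Prop :=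
  ∃ (t : ℕ) (c : ℕ → Submodule F A), c 0 = B ∧ c t = S ∧
    (∀ i ≤ t, IsSubalg mul (c i)) ∧ ∀ i < t, IsIdealIn mul (c i) (c (i + 1))

/-- `B` is nilpotent: `B^m = 0` for some `m`. -/
def IsNilpotentSub (mul : A →ₗ[F] A →ₗ[F] A) (B : Submodule F A) : Prop :=
  ∃ m, lcs mul B m = ⊥

/-- `B` is solvable: `B^{(m)} = 0` for some `m`. -/
def IsSolvableSub (mul : A →ₗ[F] A →ₗ[F] A) (B : Submodule F A) : Prop :=
  ∃ m, ds mul B m = ⊥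

/-- The centralizer `Z_A(B) = {x : xb = 0 = bx for all b ∈ B}`. -/
def centralizerSet (mul : A →ₗ[F] A →ₗ[F] A) (B : Submodule F A) : Set A :=
  {x : A | ∀ b ∈ B, mul x b = 0 ∧ mul b x = 0}

/-- `R` is the radical (the maximal solvable ideal) of the subalgebra `S`. -/
def IsRadicalIn (mul : A →ₗ[F] A →ₗ[F] A) (S R : Submodule F A) : Prop :=
  IsIdealIn mul R S ∧ IsSolvableSub mul R ∧
    ∀ T, IsIdealIn mul T S → IsSolvableSub mul T → T ≤ R

/-- `N` is the nilradical (the maximal nilpotent ideal) of the subalgebra `S`. -/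
def IsNilradicalIn (mul : A →ₗ[F] A →ₗ[F] A) (S N : Submodule F A) : Prop :=
  IsIdealIn mul N S ∧ IsNilpotentSub mul N ∧
    ∀ T, IsIdealIn mul T S → IsNilpotentSub mul T → T ≤ N

/-- `H` is a Cartan subalgebra: a nilpotent self-normalizing subalgebra. -/
def IsCartan (mul : A →ₗ[F] A →ₗ[F] A) (H : Submodule F A) : Prop :=
  IsSubalg mul H ∧ IsNilpotentSub mul H ∧
    ∀ x : A, (∀ h ∈ H, mul x h ∈ H ∧ mul h x ∈ H) → x ∈ H

/-- The subalgebra generated by a set: the smallest subalgebra containing it. -/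
def subalgGen (mul : A →ₗ[F] A →ₗ[F] A) (s : Set A) : Submodule F A :=
  sInf {S : Submodule F A | IsSubalg mul S ∧ s ⊆ (S : Set A)}

end LeibnizDefs

/-!
Let `T` be a nilpotent ideal of an ideal `R` of `A`, and let `a : A`. In the associative algebra
generated by the left multiplications by elements of `R`, those operators that move each product
`T(T(⋯(TA)))` into the next one form a nilpotent two-sided ideal `J`, and `J` contains the left
multiplications by elements of `T`. Commutation with the left multiplication by `a` is a derivation
`D` of this algebra. If `J ^ n = 0`, then `n! • Dx₁ ⋯ Dxₙ ≡ Dⁿ(x₁ ⋯ xₙ) = 0` modulo `J` for all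
`xᵢ ∈ J`, so in characteristic zero the ideal generated by `J` and `D J` is again nilpotent. Hence
`T + aT` is a nilpotent ideal of `R`.

A maximal nilpotent ideal `M` of `R` is therefore stable under all left multiplications. Since
`xy + yx` always acts trivially from the left, `M + {z | zA = 0}` is a two-sided ideal of `A`. It
acts on `A` from the left as `M` does, so it is nilpotent and lies in the nilradical of `A`.
-/

section RingDerivation

variable {S : Type*} [Ring S]

/-- An additive derivation of a ring that need not be commutative, the setting of Mathlib's
`Derivation` being that of commutative algebras. -/
def IsRingDerivation (D : S →+ S) : Prop :=
  ∀ x y, D (x * y) = D x * y + x * D y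

namespace IsRingDerivation

variable {D : S →+ S} {J : Ideal S} [J.IsTwoSided]

theorem map_mem_pow (hD : IsRingDerivation D) (k : ℕ) {y : S} (hy : y ∈ J ^ (k + 1)) :
    D y ∈ J ^ k := by
  induction k generalizing y with
  | zero => simp [Submodule.pow_zero]
  | succ k ih =>
    rw [Submodule.pow_succ] at hy
    refine Submodule.smul_induction_on hy (fun x hx z hz ↦ ?_) fun x z hx hz ↦ ?_
    · rw [smul_eq_mul, hD]
      refine add_mem ?_ (Ideal.mul_mem_right _ _ hx)
      rw [Submodule.pow_succ]
      exact Ideal.mul_mem_mul (ih hx) hz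
    · rw [map_add]
      exact add_mem hx hz

theorem iterate_mem (hD : IsRingDerivation D) (k : ℕ) {y : S} (hy : y ∈ J ^ (k + 1)) :
    D^[k] y ∈ J := by
  induction k generalizing y with
  | zero => simpa [Submodule.pow_one] using hy
  | succ k ih => exact ih (hD.map_mem_pow _ hy)

theorem mk_iterate_mul (hD : IsRingDerivation D) (k : ℕ) {y : S} (hy : y ∈ J ^ k) (e : S) :
    Ideal.Quotient.mk J (D^[k] (y * e)) =
      Ideal.Quotient.mk J (D^[k] y) * Ideal.Quotient.mk J e := by
  induction k generalizing y e with
  | zero => simp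
  | succ k ih =>
    have hye : D^[k] (y * D e) ∈ J := hD.iterate_mem k (Ideal.mul_mem_right _ _ hy)
    simp only [Function.iterate_succ_apply]
    rw [hD, iterate_map_add, map_add, ih (hD.map_mem_pow k hy),
      Ideal.Quotient.eq_zero_iff_mem.mpr hye, add_zero]

theorem mk_iterate_succ_mul (hD : IsRingDerivation D) (k : ℕ) {y : S} (hy : y ∈ J ^ k) {x : S}
    (hx : x ∈ J) :
    Ideal.Quotient.mk J (D^[k + 1] (y * x)) =
      (k + 1) * (Ideal.Quotient.mk J (D^[k] y) * Ideal.Quotient.mk J (D x)) := by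
  induction k generalizing y with
  | zero =>
    have hDyx : D y * x ∈ J := J.mul_mem_left _ hx
    simp [hD y x, Ideal.Quotient.eq_zero_iff_mem.mpr hDyx]
  | succ k ih =>
    rw [Function.iterate_succ_apply, hD, iterate_map_add, map_add, ih (hD.map_mem_pow k hy),
      hD.mk_iterate_mul (k + 1) hy, Function.iterate_succ_apply]
    push_cast
    noncomm_ring

theorem exists_mk_eq_mk_map (hD : IsRingDerivation D) {z : S}
    (hz : z ∈ J ⊔ Ideal.span (D '' J)) :
    ∃ x ∈ J, Ideal.Quotient.mk J z = Ideal.Quotient.mk J (D x) := by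
  obtain ⟨j, hj, w, hw, rfl⟩ := Submodule.mem_sup.mp hz
  simp only [map_add, Ideal.Quotient.eq_zero_iff_mem.mpr hj, zero_add]
  clear hz
  induction hw using Submodule.span_induction with
  | mem w hw =>
    obtain ⟨x, hx, rfl⟩ := hw
    exact ⟨x, hx, rfl⟩
  | zero => exact ⟨0, J.zero_mem, by simp only [map_zero]⟩
  | add v w _ _ hv hw =>
    obtain ⟨x, hx, hvx⟩ := hv
    obtain ⟨y, hy, hwy⟩ := hw
    exact ⟨x + y, add_mem hx hy, by simp [hvx, hwy]⟩
  | smul s w _ hw =>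
    obtain ⟨x, hx, hwx⟩ := hw
    have hDsx : D s * x ∈ J := J.mul_mem_left _ hx
    exact ⟨s * x, J.mul_mem_left s hx,
      by simp [hD s x, hwx, Ideal.Quotient.eq_zero_iff_mem.mpr hDsx]⟩

theorem exists_mk_iterate_eq (hD : IsRingDerivation D) (k : ℕ) {z : S}
    (hz : z ∈ (J ⊔ Ideal.span (D '' J)) ^ k) :
    ∃ y ∈ J ^ k, Ideal.Quotient.mk J (D^[k] y) = (k.factorial : S ⧸ J) * Ideal.Quotient.mk J z := by
  induction k generalizing z with
  | zero => exact ⟨z, by simp [Submodule.pow_zero], by simp⟩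
  | succ k ih =>
    rw [Submodule.pow_succ] at hz
    refine Submodule.smul_induction_on hz (fun v hv u hu ↦ ?_) fun v w hv hw ↦ ?_
    · obtain ⟨y, hy, hyv⟩ := ih hv
      obtain ⟨x, hx, hux⟩ := hD.exists_mk_eq_mk_map hu
      refine ⟨y * x, ?_, ?_⟩
      · rw [Submodule.pow_succ]
        exact Ideal.mul_mem_mul hy hx
      · rw [hD.mk_iterate_succ_mul k hy hx, hyv, smul_eq_mul, map_mul, hux, Nat.factorial_succ]
        push_cast
        simp only [mul_assoc]
    · obtain ⟨y, hy, hyv⟩ := hv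
      obtain ⟨y', hy', hyw⟩ := hw
      exact ⟨y + y', add_mem hy hy', by rw [iterate_map_add, map_add, map_add, hyv, hyw, mul_add]⟩

theorem pow_sup_span_image_le (hD : IsRingDerivation D) {n : ℕ} (hn : IsUnit (n.factorial : S))
    (hJ : J ^ n = ⊥) : (J ⊔ Ideal.span (D '' J)) ^ n ≤ J := by
  intro z hz
  obtain ⟨y, hy, hyz⟩ := hD.exists_mk_iterate_eq n hz
  obtain rfl : y = 0 := by simpa [hJ] using hy
  have hn' : IsUnit (n.factorial : S ⧸ J) := by simpa using hn.map (Ideal.Quotient.mk J)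
  rw [iterate_map_zero, map_zero, eq_comm, hn'.mul_right_eq_zero] at hyz
  exact Ideal.Quotient.eq_zero_iff_mem.mp hyz

theorem pow_sup_span_image_eq_bot (hD : IsRingDerivation D) {n : ℕ}
    (hn : IsUnit (n.factorial : S)) (hJ : J ^ n = ⊥) :
    (J ⊔ Ideal.span (D '' J)) ^ (n * n) = ⊥ := by
  obtain rfl | hn0 := eq_or_ne n 0
  · exact hJ
  have hK := hD.pow_sup_span_image_le hn hJ
  suffices ∀ k, (J ⊔ Ideal.span (D '' J)) ^ (n * k) ≤ J ^ k from eq_bot_iff.mpr (hJ ▸ this n)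
  intro k
  induction k with
  | zero => exact le_rfl
  | succ k ih =>
    rw [mul_add_one, Submodule.pow_add _ hn0, Submodule.pow_succ]
    exact Ideal.mul_mono ih hK

end IsRingDerivation

section Subalgebra

variable {R B : Type*} [CommRing R] [Ring B] [Algebra R B]

theorem lie_add_eq (b x y : B) : ⁅b, x + y⁆ = ⁅b, x⁆ + ⁅b, y⁆ := by
  simp only [Ring.lie_def]
  noncomm_ring

theorem lie_mul_eq (b x y : B) : ⁅b, x * y⁆ = ⁅b, x⁆ * y + x * ⁅b, y⁆ := by
  simp only [Ring.lie_def]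
  noncomm_ring

/-- The restriction of the inner derivation `⁅b, ·⁆` to a subalgebra that it preserves; `b` itself
need not lie in the subalgebra. -/
def innerDerivationOn (S : Subalgebra R B) (b : B) (hb : ∀ x ∈ S, ⁅b, x⁆ ∈ S) : S →+ S where
  toFun x := ⟨⁅b, (x : B)⁆, hb x x.2⟩
  map_zero' := Subtype.ext (by simp [Ring.lie_def])
  map_add' x y := Subtype.ext (lie_add_eq b (x : B) y)

theorem isRingDerivation_innerDerivationOn (S : Subalgebra R B) (b : B)
    (hb : ∀ x ∈ S, ⁅b, x⁆ ∈ S) : IsRingDerivation (innerDerivationOn S b hb) :=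
  fun x y ↦ Subtype.ext (lie_mul_eq b (x : B) y)

theorem lie_mem_adjoin {s : Set B} {b : B} (hb : ∀ x ∈ s, ⁅b, x⁆ ∈ Algebra.adjoin R s) {x : B}
    (hx : x ∈ Algebra.adjoin R s) : ⁅b, x⁆ ∈ Algebra.adjoin R s := by
  induction hx using Algebra.adjoin_induction with
  | mem x hx => exact hb x hx
  | algebraMap c => simp [Ring.lie_def, ← Algebra.commutes c b]
  | add x y _ _ hx hy =>
    rw [lie_add_eq]
    exact add_mem hx hy
  | mul x y hx hy hbx hby =>
    rw [lie_mul_eq]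
    exact add_mem (mul_mem hbx hy) (mul_mem hx hby)

end Subalgebra

end RingDerivation

section Filtration

variable {S M : Type*} [Ring S] [AddCommGroup M] [Module S M]

/-- The ideal of those scalars that move every term of a filtration into the next one; it is
nilpotent if the filtration is finite and the module faithful. -/
def shiftIdeal (V : ℕ → Submodule S M) : Ideal S :=
  ⨅ k, (V (k + 1)).colon (V k : Set M)

instance (V : ℕ → Submodule S M) : (shiftIdeal V).IsTwoSided :=
  inferInstanceAs (⨅ k, (V (k + 1)).colon (V k : Set M)).IsTwoSided

theorem mem_shiftIdeal {V : ℕ → Submodule S M} {s : S} :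
    s ∈ shiftIdeal V ↔ ∀ k, ∀ x ∈ V k, s • x ∈ V (k + 1) := by
  simp [shiftIdeal, Submodule.mem_iInf, Submodule.mem_colon]

theorem shiftIdeal_pow_smul_le (V : ℕ → Submodule S M) (k : ℕ) :
    shiftIdeal V ^ k • V 0 ≤ V k := by
  induction k with
  | zero => exact Submodule.smul_le_right
  | succ k ih =>
    rw [Ideal.IsTwoSided.pow_succ, Submodule.mul_smul]
    exact Submodule.smul_le.mpr fun s hs x hx ↦ mem_shiftIdeal.mp hs k x (ih hx)

theorem shiftIdeal_pow_eq_bot [FaithfulSMul S M] {V : ℕ → Submodule S M} (hV : V 0 = ⊤) {n : ℕ}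
    (hn : V n = ⊥) : shiftIdeal V ^ n = ⊥ := by
  refine eq_bot_iff.mpr fun s hs ↦ FaithfulSMul.eq_of_smul_eq_smul (α := M) fun x ↦ ?_
  have hsx : s • x ∈ V n :=
    shiftIdeal_pow_smul_le V n (Submodule.smul_mem_smul hs (hV ▸ Submodule.mem_top))
  simpa [hn] using hsx

end Filtration

/-- A subspace stable under a set of endomorphisms, as a module over the algebra they generate. -/
def adjoinSubmodule {F A : Type*} [CommRing F] [AddCommGroup A] [Module F A]
    {s : Set (Module.End F A)} (W : Submodule F A) (hW : ∀ φ ∈ s, ∀ w ∈ W, φ w ∈ W) :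
    Submodule (Algebra.adjoin F s) A where
  __ := W.toAddSubmonoid
  smul_mem' := by
    rintro ⟨φ, hφ⟩ w hw
    change φ w ∈ W
    induction hφ using Algebra.adjoin_induction generalizing w with
    | mem _ hφ => exact hW _ hφ w hw
    | algebraMap c => exact W.smul_mem c hw
    | add _ _ _ _ hφ hψ => exact add_mem (hφ hw) (hψ hw)
    | mul _ _ _ _ hφ hψ => exact hφ (hψ hw)

section Series

variable {F A : Type*} [Field F] [AddCommGroup A] [Module F A] {mul : A →ₗ[F] A →ₗ[F] A}

theorem mulSub_eq_map₂ (B C : Submodule F A) : mulSub mul B C = map₂ mul B C :=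
  (map₂_eq_span_image2 mul B C).symm

theorem mul_mem_mulSub {B C : Submodule F A} {b c : A} (hb : b ∈ B) (hc : c ∈ C) :
    mul b c ∈ mulSub mul B C :=
  subset_span ⟨b, hb, c, hc, rfl⟩

theorem mulSub_le {B C D : Submodule F A} :
    mulSub mul B C ≤ D ↔ ∀ b ∈ B, ∀ c ∈ C, mul b c ∈ D := by
  rw [mulSub_eq_map₂, map₂_le]

theorem mulSub_mono {B B' C C' : Submodule F A} (hB : B ≤ B') (hC : C ≤ C') :
    mulSub mul B C ≤ mulSub mul B' C' := by
  simpa only [mulSub_eq_map₂] using map₂_le_map₂ hB hC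

theorem lcs_eq_iterate (B : Submodule F A) (n : ℕ) : lcs mul B n = (mulSub mul B)^[n] B := by
  induction n with
  | zero => rfl
  | succ n ih => rw [Function.iterate_succ_apply', ← ih, lcs]

theorem iterate_mulSub_mono (B : Submodule F A) (n : ℕ) : Monotone (mulSub mul B)^[n] :=
  Monotone.iterate (fun _ _ hC ↦ mulSub_mono le_rfl hC) n

theorem lcs_mono {B C : Submodule F A} (hBC : B ≤ C) (n : ℕ) : lcs mul B n ≤ lcs mul C n := by
  induction n with
  | zero => exact hBC
  | succ n ih => exact mulSub_mono hBC ih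

theorem IsNilpotentSub.mono {B C : Submodule F A} (hC : IsNilpotentSub mul C) (hBC : B ≤ C) :
    IsNilpotentSub mul B := by
  obtain ⟨n, hn⟩ := hC
  exact ⟨n, eq_bot_iff.mpr (hn ▸ lcs_mono hBC n)⟩

theorem IsSubalg.ds_le {B : Submodule F A} (hB : IsSubalg mul B) (n : ℕ) : ds mul B n ≤ B := by
  induction n with
  | zero => exact le_rfl
  | succ n ih => exact mulSub_le.mpr fun b hb c hc ↦ hB b (ih hb) c (ih hc)

theorem IsSubalg.ds_le_lcs {B : Submodule F A} (hB : IsSubalg mul B) (n : ℕ) :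
    ds mul B n ≤ lcs mul B n := by
  induction n with
  | zero => exact le_rfl
  | succ n ih => exact mulSub_mono (hB.ds_le n) ih

theorem IsSubalg.isSolvableSub {B : Submodule F A} (hB : IsSubalg mul B)
    (hnil : IsNilpotentSub mul B) : IsSolvableSub mul B := by
  obtain ⟨n, hn⟩ := hnil
  exact ⟨n, eq_bot_iff.mpr (hn ▸ hB.ds_le_lcs n)⟩

theorem IsIdealIn.isSubalg {I S : Submodule F A} (hI : IsIdealIn mul I S) : IsSubalg mul I :=
  fun x hx y hy ↦ (hI.2 x (hI.1 hx) y hy).1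

theorem IsNilradicalIn.le_of_isRadicalIn {S R N : Submodule F A} (hN : IsNilradicalIn mul S N)
    (hR : IsRadicalIn mul S R) : N ≤ R :=
  hR.2.2 N hN.1 (hN.1.isSubalg.isSolvableSub hN.2.1)

theorem isNilpotentSub_of_iterate_top {B : Submodule F A} {n : ℕ}
    (hn : (mulSub mul B)^[n] ⊤ = ⊥) : IsNilpotentSub mul B :=
  ⟨n, eq_bot_iff.mpr (hn ▸ lcs_eq_iterate B n ▸ iterate_mulSub_mono B n le_top)⟩

theorem IsNilpotentSub.exists_iterate_top {T R : Submodule F A} (hT : IsNilpotentSub mul T)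
    (hTR : IsIdealIn mul T R) (hR : IsIdealIn mul R ⊤) : ∃ n, (mulSub mul T)^[n] ⊤ = ⊥ := by
  obtain ⟨n, hn⟩ := hT
  have hTA : mulSub mul T ⊤ ≤ R := mulSub_le.mpr fun t ht x hx ↦ (hR.2 x hx t (hTR.1 ht)).2
  have hTTA : mulSub mul T (mulSub mul T ⊤) ≤ T :=
    mulSub_le.mpr fun t ht r hr ↦ (hTR.2 r (hTA hr) t ht).2
  refine ⟨n + 2, eq_bot_iff.mpr ?_⟩
  rw [← hn, lcs_eq_iterate, Function.iterate_add_apply]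
  exact iterate_mulSub_mono T n hTTA

theorem mulSub_sup_ker (B C : Submodule F A) :
    mulSub mul (B ⊔ LinearMap.ker mul) C = mulSub mul B C := by
  have hker : map₂ mul (LinearMap.ker mul) C = ⊥ :=
    eq_bot_iff.mpr <| map₂_le.mpr fun z hz c _ ↦ by simp [LinearMap.mem_ker.mp hz]
  rw [mulSub_eq_map₂, mulSub_eq_map₂, map₂_sup_left, hker, sup_bot_eq]

end Series

section Leibniz

variable {F A : Type*} [Field F] [AddCommGroup A] [Module F A] {mul : A →ₗ[F] A →ₗ[F] A}

/-- The left Leibniz identity for a bilinear product: left multiplications are derivations. -/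
def IsLeftLeibniz (mul : A →ₗ[F] A →ₗ[F] A) : Prop :=
  ∀ x y z, mul x (mul y z) = mul (mul x y) z + mul y (mul x z)

namespace IsLeftLeibniz

theorem mul_mul_eq_lie (hmul : IsLeftLeibniz mul) (x y : A) :
    mul (mul x y) = ⁅(mul x : Module.End F A), (mul y : Module.End F A)⁆ := by
  ext z
  simp [Ring.lie_def, hmul x y z]

theorem mul_add_mul_mem_ker (hmul : IsLeftLeibniz mul) (x y : A) :
    mul x y + mul y x ∈ LinearMap.ker mul := by
  rw [LinearMap.mem_ker, map_add, hmul.mul_mul_eq_lie, hmul.mul_mul_eq_lie]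
  simp only [Ring.lie_def]
  abel

theorem mul_mem_ker (hmul : IsLeftLeibniz mul) (x : A) {z : A} (hz : z ∈ LinearMap.ker mul) :
    mul x z ∈ LinearMap.ker mul := by
  rw [LinearMap.mem_ker] at hz ⊢
  rw [hmul.mul_mul_eq_lie, hz]
  simp [Ring.lie_def]

theorem isIdealIn_sup_ker (hmul : IsLeftLeibniz mul) {M : Submodule F A}
    (hM : ∀ a, ∀ m ∈ M, mul a m ∈ M) : IsIdealIn mul (M ⊔ LinearMap.ker mul) ⊤ := by
  have hleft : ∀ a, ∀ u ∈ M ⊔ LinearMap.ker mul, mul a u ∈ M ⊔ LinearMap.ker mul := by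
    intro a u hu
    obtain ⟨m, hm, z, hz, rfl⟩ := mem_sup.mp hu
    rw [map_add]
    exact add_mem (mem_sup_left (hM a m hm)) (mem_sup_right (hmul.mul_mem_ker a hz))
  refine ⟨le_top, fun a _ u hu ↦ ⟨hleft a u hu, ?_⟩⟩
  rw [← add_sub_cancel_right (mul u a) (mul a u)]
  exact sub_mem (mem_sup_right (hmul.mul_add_mul_mem_ker u a)) (hleft a u hu)

theorem isIdealIn_sup_map (hmul : IsLeftLeibniz mul) {T R : Submodule F A}
    (hT : IsIdealIn mul T R) {a : A} (ha : ∀ r ∈ R, mul a r ∈ R ∧ mul r a ∈ R) :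
    IsIdealIn mul (T ⊔ T.map (mul a)) R := by
  refine ⟨sup_le hT.1 (map_le_iff_le_comap.mpr fun t ht ↦ (ha t (hT.1 ht)).1), fun r hr u hu ↦ ?_⟩
  obtain ⟨t, ht, _, ⟨s, hs, rfl⟩, rfl⟩ := mem_sup.mp hu
  have hright : mul (mul a s) r = mul a (mul s r) - mul s (mul a r) := by
    rw [hmul a s r, add_sub_cancel_right]
  rw [map_add, map_add, LinearMap.add_apply, hmul r a s, hright]
  obtain ⟨hrs, hsr⟩ := hT.2 r hr s hs
  constructor
  · refine add_mem (mem_sup_left (hT.2 r hr t ht).1) (add_mem (mem_sup_left ?_) (mem_sup_right ?_))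
    · exact (hT.2 _ (ha r hr).2 s hs).1
    · exact mem_map_of_mem hrs
  · refine add_mem (mem_sup_left (hT.2 r hr t ht).2) (sub_mem (mem_sup_right ?_) (mem_sup_left ?_))
    · exact mem_map_of_mem hsr
    · exact (hT.2 _ (ha r hr).1 s hs).2

theorem mul_mem_mulSub_of_stable (hmul : IsLeftLeibniz mul) {r : A} {T W : Submodule F A}
    (hT : ∀ t ∈ T, mul r t ∈ T) (hW : ∀ w ∈ W, mul r w ∈ W) :
    ∀ z ∈ mulSub mul T W, mul r z ∈ mulSub mul T W := by
  change mulSub mul T W ≤ (mulSub mul T W).comap (mul r)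
  refine mulSub_le.mpr fun t ht w hw ↦ ?_
  rw [mem_comap, hmul r t w]
  exact add_mem (mul_mem_mulSub (hT t ht) hw) (mul_mem_mulSub ht (hW w hw))

theorem mul_mem_iterate_mulSub_top (hmul : IsLeftLeibniz mul) {r : A} {T : Submodule F A}
    (hT : ∀ t ∈ T, mul r t ∈ T) (n : ℕ) :
    ∀ z ∈ (mulSub mul T)^[n] ⊤, mul r z ∈ (mulSub mul T)^[n] ⊤ := by
  induction n with
  | zero => exact fun _ _ ↦ mem_top
  | succ n ih =>
    rw [Function.iterate_succ_apply']
    exact hmul.mul_mem_mulSub_of_stable hT ih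

end IsLeftLeibniz

/-- The associative algebra of endomorphisms generated by the left multiplications by elements of
`R`. It is where the nilpotency of ideals of `R` becomes the nilpotency of associative ideals. -/
abbrev leftMulAlgebra (mul : A →ₗ[F] A →ₗ[F] A) (R : Submodule F A) :
    Subalgebra F (Module.End F A) :=
  Algebra.adjoin F (mul '' R : Set (Module.End F A))

theorem mul_mem_leftMulAlgebra {R : Submodule F A} {r : A} (hr : r ∈ R) :
    (mul r : Module.End F A) ∈ leftMulAlgebra mul R :=
  Algebra.subset_adjoin ⟨r, hr, rfl⟩

theorem iterate_mulSub_le_pow_smul {R U : Submodule F A} {K : Ideal (leftMulAlgebra mul R)}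
    (hU : ∀ u ∈ U, ∃ φ ∈ K, (φ : Module.End F A) = mul u) (n : ℕ)
    (W : Submodule (leftMulAlgebra mul R) A) :
    (mulSub mul U)^[n] (W.restrictScalars F) ≤ (K ^ n • W).restrictScalars F := by
  induction n generalizing W with
  | zero => simp [Submodule.pow_zero]
  | succ n ih =>
    have hstep : mulSub mul U (W.restrictScalars F) ≤ (K • W).restrictScalars F := by
      refine mulSub_le.mpr fun u hu w hw ↦ ?_
      obtain ⟨φ, hφ, hφu⟩ := hU u hu
      have hφw : φ • w ∈ K • W := Submodule.smul_mem_smul hφ hw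
      rwa [restrictScalars_mem, ← hφu]
    rw [Function.iterate_succ_apply, Submodule.pow_succ, Submodule.mul_smul]
    exact (iterate_mulSub_mono U n hstep).trans (ih (K • W))

theorem isNilpotentSub_of_pow_eq_bot {R U : Submodule F A} {K : Ideal (leftMulAlgebra mul R)}
    (hU : ∀ u ∈ U, ∃ φ ∈ K, (φ : Module.End F A) = mul u) {n : ℕ} (hK : K ^ n = ⊥) :
    IsNilpotentSub mul U := by
  refine isNilpotentSub_of_iterate_top (n := n) (eq_bot_iff.mpr ?_)
  simpa [hK] using iterate_mulSub_le_pow_smul hU n ⊤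

namespace IsLeftLeibniz

theorem exists_nilpotent_twoSided_ideal (hmul : IsLeftLeibniz mul) {T R : Submodule F A}
    (hR : IsIdealIn mul R ⊤) (hTR : IsIdealIn mul T R) (hT : IsNilpotentSub mul T) :
    ∃ J : Ideal (leftMulAlgebra mul R), J.IsTwoSided ∧ (∃ n : ℕ, J ^ n = ⊥) ∧
      ∀ φ : leftMulAlgebra mul R, ∀ t ∈ T, (φ : Module.End F A) = mul t → φ ∈ J := by
  obtain ⟨n, hn⟩ := hT.exists_iterate_top hTR hR
  have hstable (k : ℕ) : ∀ φ ∈ (mul '' R : Set (Module.End F A)),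
      ∀ w ∈ (mulSub mul T)^[k] ⊤, φ w ∈ (mulSub mul T)^[k] ⊤ := by
    rintro _ ⟨r, hr, rfl⟩
    exact hmul.mul_mem_iterate_mulSub_top (fun t ht ↦ (hTR.2 r hr t ht).1) k
  let V (k : ℕ) : Submodule (leftMulAlgebra mul R) A := adjoinSubmodule _ (hstable k)
  have hVn : V n = ⊥ :=
    (Submodule.eq_bot_iff _).mpr ((Submodule.eq_bot_iff ((mulSub mul T)^[n] ⊤)).mp hn)
  refine ⟨shiftIdeal V, inferInstance, ⟨n, shiftIdeal_pow_eq_bot rfl hVn⟩, fun φ t ht hφ ↦ ?_⟩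
  refine mem_shiftIdeal.mpr fun k x hx ↦ ?_
  change (φ : Module.End F A) x ∈ (mulSub mul T)^[k + 1] ⊤
  rw [hφ, Function.iterate_succ_apply']
  exact mul_mem_mulSub ht hx

theorem lie_mem_leftMulAlgebra (hmul : IsLeftLeibniz mul) {R : Submodule F A} {a : A}
    (ha : ∀ r ∈ R, mul a r ∈ R) :
    ∀ φ ∈ leftMulAlgebra mul R, ⁅(mul a : Module.End F A), φ⁆ ∈ leftMulAlgebra mul R := by
  refine fun φ hφ ↦ lie_mem_adjoin ?_ hφ
  rintro _ ⟨r, hr, rfl⟩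
  rw [← hmul.mul_mul_eq_lie]
  exact mul_mem_leftMulAlgebra (ha r hr)

theorem isNilpotentSub_sup_map [CharZero F] (hmul : IsLeftLeibniz mul) {T R : Submodule F A}
    (hR : IsIdealIn mul R ⊤) (hTR : IsIdealIn mul T R) (hT : IsNilpotentSub mul T) (a : A) :
    IsNilpotentSub mul (T ⊔ T.map (mul a)) := by
  obtain ⟨J, _, ⟨n, hn⟩, hTJ⟩ := hmul.exists_nilpotent_twoSided_ideal hR hTR hT
  have ha := hmul.lie_mem_leftMulAlgebra fun r hr ↦ (hR.2 a mem_top r hr).1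
  let D := innerDerivationOn (leftMulAlgebra mul R) (mul a) ha
  have hfactorial : IsUnit (n.factorial : leftMulAlgebra mul R) := by
    have hF : IsUnit (n.factorial : F) := (Nat.cast_ne_zero.mpr n.factorial_ne_zero).isUnit
    simpa using hF.map (algebraMap F (leftMulAlgebra mul R))
  have hK := (isRingDerivation_innerDerivationOn _ (mul a) ha).pow_sup_span_image_eq_bot
    hfactorial hn
  refine isNilpotentSub_of_pow_eq_bot (K := J ⊔ Ideal.span (D '' J)) (fun u hu ↦ ?_) hK
  obtain ⟨t, ht, _, ⟨s, hs, rfl⟩, rfl⟩ := mem_sup.mp hu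
  let L (r : R) : leftMulAlgebra mul R := ⟨mul r, mul_mem_leftMulAlgebra r.2⟩
  refine ⟨L ⟨t, hTR.1 ht⟩ + D (L ⟨s, hTR.1 hs⟩), add_mem (mem_sup_left ?_) (mem_sup_right ?_), ?_⟩
  · exact hTJ _ t ht rfl
  · exact Ideal.subset_span ⟨_, hTJ _ s hs rfl, rfl⟩
  · rw [map_add, hmul.mul_mul_eq_lie]
    rfl

theorem exists_stable_nilpotent_ideal_ge [CharZero F] (hmul : IsLeftLeibniz mul)
    {T R : Submodule F A} [FiniteDimensional F R] (hR : IsIdealIn mul R ⊤)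
    (hTR : IsIdealIn mul T R) (hT : IsNilpotentSub mul T) :
    ∃ M, T ≤ M ∧ IsIdealIn mul M R ∧ IsNilpotentSub mul M ∧ ∀ a, ∀ m ∈ M, mul a m ∈ M := by
  have : WellFoundedGT (Set.Iic R) := R.mapIic.symm.toOrderEmbedding.wellFoundedGT
  obtain ⟨M, hTM, hM⟩ := exists_maximal_ge_of_wellFoundedGT
    (fun M : Set.Iic R ↦ IsIdealIn mul M.1 R ∧ IsNilpotentSub mul M.1) ⟨T, hTR.1⟩ ⟨hTR, hT⟩
  obtain ⟨hMR, hMnil⟩ := hM.prop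
  refine ⟨M, hTM, hMR, hMnil, fun a m hm ↦ ?_⟩
  have hideal := hmul.isIdealIn_sup_map hMR fun r hr ↦ hR.2 a mem_top r hr
  have hnil := hmul.isNilpotentSub_sup_map hR hMR hMnil a
  exact hM.le_of_ge (y := ⟨_, hideal.1⟩) ⟨hideal, hnil⟩ (le_sup_left (a := M.1))
    (mem_sup_right (mem_map_of_mem hm))

theorem le_of_isNilradicalIn_top [CharZero F] (hmul : IsLeftLeibniz mul)
    {T R N : Submodule F A} [FiniteDimensional F R] (hN : IsNilradicalIn mul ⊤ N)
    (hR : IsIdealIn mul R ⊤) (hTR : IsIdealIn mul T R) (hT : IsNilpotentSub mul T) : T ≤ N := by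
  obtain ⟨M, hTM, hMR, hMnil, hM⟩ := hmul.exists_stable_nilpotent_ideal_ge hR hTR hT
  obtain ⟨n, hn⟩ := hMnil.exists_iterate_top hMR hR
  have hnil : IsNilpotentSub mul (M ⊔ LinearMap.ker mul) :=
    isNilpotentSub_of_iterate_top ((funext (mulSub_sup_ker M) : mulSub mul _ = _) ▸ hn)
  exact (hTM.trans le_sup_left).trans (hN.2.2 _ (hmul.isIdealIn_sup_ker hM) hnil)

end IsLeftLeibniz

end Leibniz

theorem stmt_11_general {F A : Type*} [Field F] [CharZero F] [AddCommGroup A] [Module F A]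
    (mul : A →ₗ[F] A →ₗ[F] A)
    (hleib : ∀ x y z : A, mul x (mul y z) = mul (mul x y) z + mul y (mul x z))
    (R N : Submodule F A) [FiniteDimensional F R]
    (hR : IsIdealIn mul R ⊤) (hN : IsNilradicalIn mul ⊤ N) :
    IsNilradicalIn mul R (N ⊓ R) := by
  refine ⟨⟨inf_le_right, fun x _ y hy ↦ ?_⟩, hN.2.1.mono inf_le_left, fun T hTR hT ↦ ?_⟩
  · obtain ⟨hN₁, hN₂⟩ := hN.1.2 x mem_top y hy.1
    obtain ⟨hR₁, hR₂⟩ := hR.2 x mem_top y hy.2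
    exact ⟨⟨hN₁, hR₁⟩, ⟨hN₂, hR₂⟩⟩
  · exact le_inf (IsLeftLeibniz.le_of_isNilradicalIn_top hleib hN hR hTR hT) hTR.1

/-- over characteristic zero, `nilrad(A) = nilrad(rad(A))`. -/
theorem stmt_11 {F A : Type*} [Field F] [CharZero F]
    [AddCommGroup A] [Module F A] [FiniteDimensional F A]
    (mul : A →ₗ[F] A →ₗ[F] A)
    (hleib : ∀ x y z : A, mul x (mul y z) = mul (mul x y) z + mul y (mul x z))
    (R N : Submodule F A)
    (hR : IsRadicalIn mul ⊤ R) (hN : IsNilradicalIn mul ⊤ N) :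
    IsNilradicalIn mul R N := by
  rw [← inf_eq_left.mpr (hN.le_of_isRadicalIn hR)]
  exact stmt_11_general mul hleib R N hR.1 hN
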